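/- arXiv:2405.09878 — 2 statements merged into one kernel-verified Lean document; each statement's English description precedes it below -/
import Mathlib

section
/- Let n ≥ d ≥ 1, let W ∈ ℝ^{d×n} have columns ω_1,…,ω_n ∈ ℝ^d with ‖ω_j‖ ≥ 1 for all j, let u ∈ ℝ^n, z ∈ ℝ^d, and let f : ℝ^d → ℝ^d be given by f(x) = W·Φ(Wᵀx + u) + z, where Φ applies the hard tanh function componentwise. Then the set of stable fixed points of f is finite and has at most Σ_{j=0}^{d} C(n,j) elements. -/
noncomputable section

/-- The hard tanh activation: `−1` for `t < −1`, `t` on `[−1,1]`, and `1` for `t > 1`. -/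
def hardTanh (t : ℝ) : ℝ := max (-1) (min 1 t)

/-- A stable fixed point of `f : ℝ^d → ℝ^d`: a fixed point in a neighborhood of which `f` is
differentiable and at which the spectral norm of the Jacobian (the operator norm of the
Fréchet derivative with respect to the Euclidean norm) is `< 1`. -/
def IsStableFixedPointE {d : ℕ}
    (f : EuclideanSpace ℝ (Fin d) → EuclideanSpace ℝ (Fin d))
    (x : EuclideanSpace ℝ (Fin d)) : Prop :=
  f x = x ∧ (∃ ε > 0, ∀ y ∈ Metric.ball x ε, DifferentiableAt ℝ f y) ∧ ‖fderiv ℝ f x‖ < 1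

/-!
At a stable fixed point every unit is saturated: the map is a sum of monotone ridge functions, so
along a direction `v` with `⟪ω j, v⟫ = 1` its derivative has a quadratic form at least the slope of
the `j`-th unit, and an unsaturated unit with `1 ≤ ‖ω j‖` forces the derivative to have norm at
least `1`. A saturated point is mapped to a value that depends only on the set of units with
positive input, so stable fixed points are counted by these sets. Half-spaces whose normals have
rank `r` shatter no family of more than `r` indices, because a linear dependence among the normals
would be violated by one of the two sign patterns it singles out, and the Sauer–Shelah lemma
finishes the count.
-/

section HardTanh

open Filter Topology

variable {t : ℝ}

theorem hardTanh_monotone : Monotone hardTanh :=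
  fun _ _ h ↦ max_le_max le_rfl (min_le_min le_rfl h)

theorem hardTanh_of_abs_le_one (ht : |t| ≤ 1) : hardTanh t = t := by
  obtain ⟨hlow, hhigh⟩ := abs_le.1 ht
  rw [hardTanh, min_eq_right hhigh, max_eq_right hlow]

theorem hardTanh_of_one_le_abs (ht : 1 ≤ |t|) : hardTanh t = if 0 < t then 1 else -1 := by
  unfold hardTanh
  rcases le_abs.1 ht with hhigh | hlow
  · rw [if_pos (by linarith), min_eq_left hhigh, max_eq_right (by norm_num)]
  · rw [if_neg (by linarith), min_eq_right (by linarith), max_eq_left (by linarith)]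

-- At `t = ±1` only the increments pointing back into `[-1, 1]` qualify, hence `∃ᶠ` and not `∀ᶠ`.
theorem frequently_sq_le_hardTanh_sub_mul (ht : |t| ≤ 1) :
    ∃ᶠ s in 𝓝[≠] (0 : ℝ), s ^ 2 ≤ (hardTanh (t + s) - hardTanh t) * s := by
  have increment {s : ℝ} (hs : |t + s| ≤ 1) : s ^ 2 ≤ (hardTanh (t + s) - hardTanh t) * s := by
    rw [hardTanh_of_abs_le_one hs, hardTanh_of_abs_le_one ht]
    exact le_of_eq (by ring)
  obtain ⟨hlow, hhigh⟩ := abs_le.1 ht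
  rcases le_total t 0 with hneg | hpos
  · have hright : ∀ᶠ s in 𝓝[>] (0 : ℝ), |t + s| ≤ 1 := by
      filter_upwards [Ioo_mem_nhdsGT one_pos] with s hs
      exact abs_le.2 ⟨by linarith [hs.1], by linarith [hs.2]⟩
    exact (hright.mono fun _ ↦ increment).frequently.filter_mono (nhdsGT_le_nhdsNE 0)
  · have hleft : ∀ᶠ s in 𝓝[<] (0 : ℝ), |t + s| ≤ 1 := by
      filter_upwards [Ioo_mem_nhdsLT neg_one_lt_zero] with s hs
      exact abs_le.2 ⟨by linarith [hs.1], by linarith [hs.2]⟩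
    exact (hleft.mono fun _ ↦ increment).frequently.filter_mono (nhdsLT_le_nhdsNE 0)

end HardTanh

section PositiveSet

theorem finrank_range_linearMap_apply_le {K V V' ι : Type*} [DivisionRing K] [AddCommGroup V]
    [Module K V] [AddCommGroup V'] [Module K V'] [Finite ι] (T : V →ₗ[K] V') (v : ι → V) :
    (Set.range fun j ↦ T (v j)).finrank K ≤ (Set.range v).finrank K := by
  have : FiniteDimensional K (Submodule.span K (Set.range v)) :=
    FiniteDimensional.span_of_finite K (Set.finite_range v)
  rw [Set.finrank, Set.range_comp' T v, ← Submodule.map_span]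
  exact Submodule.finrank_map_le _ _

theorem sum_mul_apply_add_eq_of_sum_smul_eq_zero {R M ι : Type*} [CommSemiring R] [AddCommMonoid M]
    [Module R M] {ℓ : ι → Module.Dual R M} {g : ι → R} {S : Finset ι}
    (hg : ∑ j ∈ S, g j • ℓ j = 0) (u : ι → R) (x : M) :
    ∑ j ∈ S, g j * (ℓ j x + u j) = ∑ j ∈ S, g j * u j := by
  have hgx : ∑ j ∈ S, g j * ℓ j x = 0 := by
    simpa using congrArg (fun φ : Module.Dual R M ↦ φ x) hg
  simp only [mul_add, Finset.sum_add_distrib, hgx, zero_add]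

variable {K V ι : Type*} [Field K] [LinearOrder K] [AddCommGroup V] [Module K V] [Fintype ι]

/-- The indices of the open half-spaces `0 < ℓ j x + u j` that contain the point `x`. As `x` varies,
these sets label the cells of the hyperplane arrangement `ℓ j x + u j = 0`; a point on a hyperplane
counts as outside the corresponding half-space. -/
def positiveSet (ℓ : ι → Module.Dual K V) (u : ι → K) (x : V) : Finset ι :=
  {j | 0 < ℓ j x + u j}

theorem mem_positiveSet {ℓ : ι → Module.Dual K V} {u : ι → K} {x : V} {j : ι} :
    j ∈ positiveSet ℓ u x ↔ 0 < ℓ j x + u j := by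
  simp [positiveSet]

section Shatters

variable [DecidableEq ι] {ℓ : ι → Module.Dual K V} {u g : ι → K} {S : Finset ι}
  {A : Finset (Finset ι)}

theorem exists_forall_pos_iff_of_shatters (hA : (A : Set (Finset ι)) ⊆ Set.range (positiveSet ℓ u))
    (hS : A.Shatters S) (p : ι → Prop) : ∃ x, ∀ j ∈ S, (0 < ℓ j x + u j ↔ p j) := by
  classical
  obtain ⟨B, hB, hSB⟩ := hS (Finset.filter_subset p S)
  obtain ⟨x, rfl⟩ := hA hB
  refine ⟨x, fun j hj ↦ ?_⟩
  simpa [hj, mem_positiveSet] using Finset.ext_iff.1 hSB j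

variable [IsStrictOrderedRing K]

theorem sum_mul_nonneg_and_pos_of_shatters (hA : (A : Set (Finset ι)) ⊆ Set.range (positiveSet ℓ u))
    (hS : A.Shatters S) (hg : ∑ j ∈ S, g j • ℓ j = 0) :
    0 ≤ ∑ j ∈ S, g j * u j ∧ ((∃ i ∈ S, 0 < g i) → 0 < ∑ j ∈ S, g j * u j) := by
  obtain ⟨x, hx⟩ := exists_forall_pos_iff_of_shatters hA hS fun j ↦ 0 < g j
  have term_pos : ∀ j ∈ S, 0 < g j → 0 < g j * (ℓ j x + u j) :=
    fun j hj hgj ↦ mul_pos hgj ((hx j hj).2 hgj)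
  have term_nonneg : ∀ j ∈ S, 0 ≤ g j * (ℓ j x + u j) := fun j hj ↦ by
    by_cases hgj : 0 < g j
    · exact (term_pos j hj hgj).le
    · exact mul_nonneg_of_nonpos_of_nonpos (not_lt.1 hgj) (not_lt.1 (mt (hx j hj).1 hgj))
  rw [← sum_mul_apply_add_eq_of_sum_smul_eq_zero hg u x]
  exact ⟨Finset.sum_nonneg term_nonneg,
    fun ⟨i, hi, hgi⟩ ↦ Finset.sum_pos' term_nonneg ⟨i, hi, term_pos i hi hgi⟩⟩

theorem linearIndepOn_of_shatters (hA : (A : Set (Finset ι)) ⊆ Set.range (positiveSet ℓ u))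
    (hS : A.Shatters S) : LinearIndepOn K ℓ (S : Set ι) := by
  refine linearIndepOn_finset_iff.2 fun g hg i hi ↦ ?_
  have hneg : ∑ j ∈ S, (-g) j • ℓ j = 0 := by
    rw [← neg_eq_zero.2 hg, ← Finset.sum_neg_distrib]
    exact Finset.sum_congr rfl fun j _ ↦ neg_smul (g j) (ℓ j)
  obtain ⟨nonneg, pos⟩ := sum_mul_nonneg_and_pos_of_shatters hA hS hg
  obtain ⟨nonpos, neg⟩ := sum_mul_nonneg_and_pos_of_shatters hA hS hneg
  simp only [Pi.neg_apply, neg_mul, Finset.sum_neg_distrib, Left.nonneg_neg_iff,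
    Left.neg_pos_iff] at nonpos neg
  exact le_antisymm (not_lt.1 fun h ↦ (pos ⟨i, hi, h⟩).not_ge nonpos)
    (not_lt.1 fun h ↦ (neg ⟨i, hi, h⟩).not_ge nonneg)

theorem card_le_finrank_of_shatters (hA : (A : Set (Finset ι)) ⊆ Set.range (positiveSet ℓ u))
    (hS : A.Shatters S) : S.card ≤ (Set.range ℓ).finrank K := by
  have : FiniteDimensional K (Submodule.span K (Set.range ℓ)) :=
    FiniteDimensional.span_of_finite K (Set.finite_range ℓ)
  calc S.card = Module.finrank K (Submodule.span K (Set.range fun j : S ↦ ℓ j)) := by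
        rw [← Fintype.card_coe]
        exact (finrank_span_eq_card (linearIndepOn_of_shatters hA hS)).symm
    _ ≤ (Set.range ℓ).finrank K :=
        Submodule.finrank_mono (Submodule.span_mono (Set.range_comp_subset_range _ ℓ))

end Shatters

theorem ncard_range_positiveSet_le [IsStrictOrderedRing K] (ℓ : ι → Module.Dual K V)
    (u : ι → K) :
    (Set.range (positiveSet ℓ u)).ncard ≤
      ∑ k ∈ Finset.range ((Set.range ℓ).finrank K + 1), (Fintype.card ι).choose k := by
  classical
  set A : Finset (Finset ι) := (Set.toFinite (Set.range (positiveSet ℓ u))).toFinset with hAdef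
  have hvc : A.vcDim ≤ (Set.range ℓ).finrank K := Finset.sup_le fun S hS ↦
    card_le_finrank_of_shatters (u := u) (by simp [hAdef]) (Finset.mem_shatterer.1 hS)
  calc (Set.range (positiveSet ℓ u)).ncard = A.card := Set.ncard_eq_toFinset_card _ _
    _ ≤ A.shatterer.card := A.card_le_card_shatterer
    _ ≤ ∑ k ∈ Finset.Iic A.vcDim, (Fintype.card ι).choose k := Finset.card_shatterer_le_sum_vcDim
    _ ≤ _ := by
      rw [← Nat.range_succ_eq_Iic]
      gcongr

end PositiveSet

section TiedLayer

open Filter Topology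
open scoped RealInnerProductSpace

variable {E ι : Type*} [NormedAddCommGroup E] [InnerProductSpace ℝ E]

theorem le_opNorm_mul_sq_of_frequently_le_inner {f : E → E} {f' : E →L[ℝ] E} {x v : E} {κ : ℝ}
    (hf : HasFDerivAt f f' x)
    (hκ : ∃ᶠ s in 𝓝[≠] (0 : ℝ), κ * s ^ 2 ≤ ⟪f (x + s • v) - f x, s • v⟫) :
    κ ≤ ‖f'‖ * ‖v‖ ^ 2 := by
  have hslope : Tendsto (fun s : ℝ ↦ ⟪s⁻¹ • (f (x + s • v) - f x), v⟫) (𝓝[≠] 0) (𝓝 ⟪f' v, v⟫) :=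
    (hf.hasLineDerivAt v).tendsto_slope_zero.inner tendsto_const_nhds
  have hquad : κ ≤ ⟪f' v, v⟫ := by
    refine ge_of_tendsto_of_frequently hslope ?_
    refine (hκ.and_eventually self_mem_nhdsWithin).mono fun s ⟨hs, hs0⟩ ↦ ?_
    have hs2 : 0 < s ^ 2 := sq_pos_of_ne_zero hs0
    refine le_of_mul_le_mul_right (hs.trans_eq ?_) hs2
    rw [real_inner_smul_left, real_inner_smul_right]
    field_simp [show s ≠ 0 from hs0]
  calc κ ≤ ⟪f' v, v⟫ := hquad
    _ ≤ ‖f' v‖ * ‖v‖ := real_inner_le_norm _ _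
    _ ≤ ‖f'‖ * ‖v‖ * ‖v‖ := by gcongr; exact f'.le_opNorm v
    _ = ‖f'‖ * ‖v‖ ^ 2 := by ring

variable [Fintype ι] {φ : ℝ → ℝ} {ω : ι → E} {u : ι → ℝ} {z : E}

/-- The map `x ↦ W Φ(Wᵀ x + u) + z` for an activation `φ`, in coordinate-free form: the vectors
`ω j` are the columns of `W`. -/
def tiedLayer (φ : ℝ → ℝ) (ω : ι → E) (u : ι → ℝ) (z x : E) : E :=
  ∑ j, φ (⟪ω j, x⟫ + u j) • ω j + z

theorem inner_tiedLayer_add_sub (φ : ℝ → ℝ) (ω : ι → E) (u : ι → ℝ) (z x v : E) :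
    ⟪tiedLayer φ ω u z (x + v) - tiedLayer φ ω u z x, v⟫ =
      ∑ j, (φ (⟪ω j, x⟫ + u j + ⟪ω j, v⟫) - φ (⟪ω j, x⟫ + u j)) * ⟪ω j, v⟫ := by
  simp only [tiedLayer, add_sub_add_right_eq_sub, ← Finset.sum_sub_distrib, ← sub_smul, sum_inner,
    real_inner_smul_left, inner_add_right, add_right_comm]

theorem sub_mul_inner_le_inner_tiedLayer_of_monotone (hφ : Monotone φ) (x v : E) (j : ι) :
    (φ (⟪ω j, x⟫ + u j + ⟪ω j, v⟫) - φ (⟪ω j, x⟫ + u j)) * ⟪ω j, v⟫ ≤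
      ⟪tiedLayer φ ω u z (x + v) - tiedLayer φ ω u z x, v⟫ := by
  have increment_nonneg (t s : ℝ) : 0 ≤ (φ (t + s) - φ t) * s := by
    rcases le_total 0 s with hs | hs
    · exact mul_nonneg (sub_nonneg.2 (hφ (by linarith))) hs
    · exact mul_nonneg_of_nonpos_of_nonpos (sub_nonpos.2 (hφ (by linarith))) hs
  rw [inner_tiedLayer_add_sub]
  exact Finset.single_le_sum
    (f := fun k ↦ (φ (⟪ω k, x⟫ + u k + ⟪ω k, v⟫) - φ (⟪ω k, x⟫ + u k)) * ⟪ω k, v⟫)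
    (fun k _ ↦ increment_nonneg _ _) (Finset.mem_univ j)

theorem mul_norm_sq_le_norm_fderiv_tiedLayer (hφ : Monotone φ) {x : E} {κ : ℝ} {j : ι}
    (hdiff : DifferentiableAt ℝ (tiedLayer φ ω u z) x)
    (hκ : ∃ᶠ s in 𝓝[≠] (0 : ℝ),
      κ * s ^ 2 ≤ (φ (⟪ω j, x⟫ + u j + s) - φ (⟪ω j, x⟫ + u j)) * s) :
    κ * ‖ω j‖ ^ 2 ≤ ‖fderiv ℝ (tiedLayer φ ω u z) x‖ := by
  rcases eq_or_ne (ω j) 0 with hzero | hne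
  · simp [hzero]
  have hnorm : ‖ω j‖ ≠ 0 := norm_ne_zero_iff.2 hne
  set v : E := (‖ω j‖ ^ 2)⁻¹ • ω j with hv
  have hinner : ⟪ω j, v⟫ = 1 := by
    rw [hv, real_inner_smul_right, real_inner_self_eq_norm_sq,
      inv_mul_cancel₀ (pow_ne_zero 2 hnorm)]
  have hnormv : ‖v‖ * ‖ω j‖ = 1 := by
    rw [hv, norm_smul, norm_inv, norm_pow, norm_norm]
    field_simp
  have hbound : κ ≤ ‖fderiv ℝ (tiedLayer φ ω u z) x‖ * ‖v‖ ^ 2 := by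
    refine le_opNorm_mul_sq_of_frequently_le_inner hdiff.hasFDerivAt ?_
    refine hκ.mono fun s hs ↦ hs.trans ?_
    simpa only [real_inner_smul_right, hinner, mul_one] using
      sub_mul_inner_le_inner_tiedLayer_of_monotone (ω := ω) (u := u) (z := z) hφ x (s • v) j
  calc κ * ‖ω j‖ ^ 2 ≤ ‖fderiv ℝ (tiedLayer φ ω u z) x‖ * ‖v‖ ^ 2 * ‖ω j‖ ^ 2 := by gcongr
    _ = ‖fderiv ℝ (tiedLayer φ ω u z) x‖ * (‖v‖ * ‖ω j‖) ^ 2 := by ring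
    _ = ‖fderiv ℝ (tiedLayer φ ω u z) x‖ := by rw [hnormv, one_pow, mul_one]

end TiedLayer

section StableFixedPoints

open scoped RealInnerProductSpace

variable {E ι : Type*} [NormedAddCommGroup E] [InnerProductSpace ℝ E] [Fintype ι]
  {ω : ι → E} {u : ι → ℝ} {z : E}

/-- The fixed points of `f` at which `f` is differentiable with derivative of norm `< 1`. In
contrast to `IsStableFixedPointE`, differentiability is required only at the point itself. -/
def stableFixedPoints (f : E → E) : Set E :=
  {x | f x = x ∧ DifferentiableAt ℝ f x ∧ ‖fderiv ℝ f x‖ < 1}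

theorem IsStableFixedPointE.mem_stableFixedPoints {d : ℕ}
    {f : EuclideanSpace ℝ (Fin d) → EuclideanSpace ℝ (Fin d)} {x : EuclideanSpace ℝ (Fin d)}
    (hx : IsStableFixedPointE f x) : x ∈ stableFixedPoints f := by
  obtain ⟨hfix, ⟨ε, hε, hdiff⟩, hnorm⟩ := hx
  exact ⟨hfix, hdiff x (Metric.mem_ball_self hε), hnorm⟩

theorem one_lt_abs_of_mem_stableFixedPoints (hω : ∀ j, 1 ≤ ‖ω j‖) {x : E}
    (hx : x ∈ stableFixedPoints (tiedLayer hardTanh ω u z)) (j : ι) : 1 < |⟪ω j, x⟫ + u j| := by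
  obtain ⟨-, hdiff, hnorm⟩ := hx
  by_contra! hunsat
  have hle : 1 * ‖ω j‖ ^ 2 ≤ ‖fderiv ℝ (tiedLayer hardTanh ω u z) x‖ :=
    mul_norm_sq_le_norm_fderiv_tiedLayer hardTanh_monotone hdiff
      (by simpa only [one_mul] using frequently_sq_le_hardTanh_sub_mul hunsat)
  linarith [one_le_pow₀ (hω j) (n := 2)]

theorem injOn_positiveSet_stableFixedPoints (hω : ∀ j, 1 ≤ ‖ω j‖) :
    Set.InjOn (positiveSet (fun j ↦ innerₗ E (ω j)) u)
      (stableFixedPoints (tiedLayer hardTanh ω u z)) := by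
  intro x hx y hy hxy
  have hunit (j : ι) : hardTanh (⟪ω j, x⟫ + u j) = hardTanh (⟪ω j, y⟫ + u j) := by
    have hsign : 0 < ⟪ω j, x⟫ + u j ↔ 0 < ⟪ω j, y⟫ + u j := by
      simpa only [mem_positiveSet, innerₗ_apply_apply] using Finset.ext_iff.1 hxy j
    rw [hardTanh_of_one_le_abs (one_lt_abs_of_mem_stableFixedPoints hω hx j).le,
      hardTanh_of_one_le_abs (one_lt_abs_of_mem_stableFixedPoints hω hy j).le]
    simp only [hsign]
  calc x = tiedLayer hardTanh ω u z x := hx.1.symm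
    _ = tiedLayer hardTanh ω u z y := by simp only [tiedLayer, hunit]
    _ = y := hy.1

theorem stableFixedPoints_card_le_of_columns_general (ω : ι → E) (u : ι → ℝ) (z : E)
    (hω : ∀ j, 1 ≤ ‖ω j‖) :
    (stableFixedPoints (tiedLayer hardTanh ω u z)).Finite ∧
      (stableFixedPoints (tiedLayer hardTanh ω u z)).ncard ≤
        ∑ k ∈ Finset.range ((Set.range ω).finrank ℝ + 1), (Fintype.card ι).choose k := by
  set P : E → Finset ι := positiveSet (fun j ↦ innerₗ E (ω j)) u
  have hinj : Set.InjOn P (stableFixedPoints (tiedLayer hardTanh ω u z)) :=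
    injOn_positiveSet_stableFixedPoints hω
  refine ⟨Set.Finite.of_finite_image (Set.toFinite _) hinj, ?_⟩
  calc (stableFixedPoints (tiedLayer hardTanh ω u z)).ncard
      ≤ (Set.range P).ncard := Set.ncard_le_ncard_of_injOn P (fun x _ ↦ Set.mem_range_self x) hinj
    _ ≤ _ := ncard_range_positiveSet_le _ _
    _ ≤ _ := by
      gcongr
      exact finrank_range_linearMap_apply_le (innerₗ E) ω

theorem eq_tiedLayer_of_forall_apply {d n : ℕ} {φ : ℝ → ℝ} {W : Matrix (Fin d) (Fin n) ℝ}
    {u : Fin n → ℝ} {z : EuclideanSpace ℝ (Fin d)} {ω : Fin n → EuclideanSpace ℝ (Fin d)}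
    (hω : ∀ j i, ω j i = W i j) {f : EuclideanSpace ℝ (Fin d) → EuclideanSpace ℝ (Fin d)}
    (hf : ∀ x i, f x i = (∑ j, W i j * φ ((∑ t, W t j * x t) + u j)) + z i) :
    f = tiedLayer φ ω u z := by
  ext x i
  simp [hf, tiedLayer, PiLp.inner_apply, hω, mul_comm]

end StableFixedPoints

/-- For `f(x) = W·Φ(Wᵀx + u) + z` with hard tanh activation, `n ≥ d ≥ 1`,
where the columns `ω_j` of `W` satisfy `‖ω_j‖ ≥ 1`, the set of stable fixed points of `f` is
finite with at most `Σ_{j=0}^{d} C(n,j)` elements. -/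
theorem stableFixedPoints_card_le_of_columns
    {d n : ℕ} (hd : 1 ≤ d) (hdn : d ≤ n)
    (W : Matrix (Fin d) (Fin n) ℝ) (u : Fin n → ℝ) (z : EuclideanSpace ℝ (Fin d))
    (ω : Fin n → EuclideanSpace ℝ (Fin d)) (hω : ∀ j i, ω j i = W i j)
    (hnorm : ∀ j, 1 ≤ ‖ω j‖)
    (f : EuclideanSpace ℝ (Fin d) → EuclideanSpace ℝ (Fin d))
    (hf : ∀ x i, f x i = (∑ j, W i j * hardTanh ((∑ t, W t j * x t) + u j)) + z i) :
    {x | IsStableFixedPointE f x}.Finite ∧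
      {x | IsStableFixedPointE f x}.ncard ≤ ∑ j ∈ Finset.range (d + 1), Nat.choose n j := by
  obtain rfl := eq_tiedLayer_of_forall_apply hω hf
  obtain ⟨hfin, hcard⟩ := stableFixedPoints_card_le_of_columns_general ω u z hnorm
  have hsub : {x | IsStableFixedPointE (tiedLayer hardTanh ω u z) x} ⊆
      stableFixedPoints (tiedLayer hardTanh ω u z) := fun _ hx ↦ hx.mem_stableFixedPoints
  have hrank : (Set.range ω).finrank ℝ ≤ d :=
    (Submodule.finrank_le _).trans_eq finrank_euclideanSpace_fin
  refine ⟨hfin.subset hsub, (Set.ncard_le_ncard hsub hfin).trans (hcard.trans ?_)⟩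
  rw [Fintype.card_fin]
  gcongr

end
end

section
/- Let W ∈ ℝ^{d×n} have columns ω_1,…,ω_n ∈ ℝ^d, let φ : ℝ → ℝ be differentiable with φ′(t) ≥ 0 for all t, and let f(x) = W·Φ(Wᵀx) where Φ applies φ componentwise. If x ∈ ℝ^d is such that the spectral norm of the Jacobian of f at x is strictly less than 1, then φ′(ω_jᵀx)·‖ω_j‖² < 1 for every j ∈ {1,…,n}. In particular, if some j satisfies φ′(ω_jᵀx)·‖ω_j‖² ≥ 1, then x is not a stable fixed point of f. -/
noncomputable section

/-!
The Jacobian of `f` at `x` is the sum of the positive semidefinite rank-one operators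
`φ′(ω_jᵀx) ω_j ω_jᵀ`. The Rayleigh quotient of this sum at `ω_j` is at least its `j`-th term
`φ′(ω_jᵀx)‖ω_j‖²`, since the other terms are nonnegative, and at most the norm of the Jacobian.
-/

section RankOne

open InnerProductSpace

variable {𝕜 E ι : Type*} [RCLike 𝕜] [NormedAddCommGroup E] [InnerProductSpace 𝕜 E] [Fintype ι]

theorem reApplyInnerSelf_sum_smul_rankOne_self (c : ι → ℝ) (ω : ι → E) (v : E) :
    (∑ k, (c k : 𝕜) • rankOne 𝕜 (ω k) (ω k)).reApplyInnerSelf v =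
      ∑ k, c k * ‖inner 𝕜 (ω k) v‖ ^ 2 := by
  simp only [ContinuousLinearMap.reApplyInnerSelf_apply, sum_apply, smul_apply,
    rankOne_apply, sum_inner, inner_smul_left, RCLike.conj_ofReal,
    RCLike.conj_mul, map_sum, RCLike.re_ofReal_mul]
  norm_cast

theorem mul_norm_sq_le_norm_sum_smul_rankOne_self {c : ι → ℝ} (hc : ∀ k, 0 ≤ c k) (ω : ι → E)
    (j : ι) :
    c j * ‖ω j‖ ^ 2 ≤ ‖∑ k, (c k : 𝕜) • rankOne 𝕜 (ω k) (ω k)‖ := by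
  set T := ∑ k, (c k : 𝕜) • rankOne 𝕜 (ω k) (ω k)
  have term_le_form : c j * ‖ω j‖ ^ 4 ≤ T.reApplyInnerSelf (ω j) := calc
    c j * ‖ω j‖ ^ 4 = c j * ‖inner 𝕜 (ω j) (ω j)‖ ^ 2 := by
      rw [inner_self_eq_norm_sq_to_K, norm_pow, RCLike.norm_ofReal, abs_norm, ← pow_mul]
    _ ≤ ∑ k, c k * ‖inner 𝕜 (ω k) (ω j)‖ ^ 2 :=
      Finset.single_le_sum (f := fun k ↦ c k * ‖inner 𝕜 (ω k) (ω j)‖ ^ 2)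
        (fun k _ ↦ mul_nonneg (hc k) (sq_nonneg _)) (Finset.mem_univ j)
    _ = T.reApplyInnerSelf (ω j) := (reApplyInnerSelf_sum_smul_rankOne_self c ω (ω j)).symm
  calc
    c j * ‖ω j‖ ^ 2 = c j * ‖ω j‖ ^ 4 / ‖ω j‖ ^ 2 := by
      rcases eq_or_ne ‖ω j‖ 0 with hω | hω
      · simp [hω]
      · field_simp
    _ ≤ T.rayleighQuotient (ω j) := div_le_div_of_nonneg_right term_le_form (sq_nonneg _)
    _ ≤ ‖T‖ := (le_abs_self _).trans (T.rayleighQuotient_le_norm (ω j))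

end RankOne

section RidgeSum

open InnerProductSpace

variable {E ι : Type*} [NormedAddCommGroup E] [InnerProductSpace ℝ E] [Fintype ι]
  {ω : ι → E} {φ : ι → ℝ → ℝ} {φ' : ι → ℝ} {x : E}

theorem hasFDerivAt_sum_comp_inner_smul {F : Type*} [NormedAddCommGroup F] [NormedSpace ℝ F]
    (u : ι → F) (hφ : ∀ j, HasDerivAt (φ j) (φ' j) (inner ℝ (ω j) x)) :
    HasFDerivAt (fun y ↦ ∑ j, φ j (inner ℝ (ω j) y) • u j)
      (∑ j, φ' j • rankOne ℝ (u j) (ω j)) x := by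
  refine HasFDerivAt.fun_sum fun j _ ↦ ?_
  have ridge : HasFDerivAt (fun y ↦ φ j (inner ℝ (ω j) y)) (φ' j • innerSL ℝ (ω j)) x :=
    (hφ j).comp_hasFDerivAt x (innerSL ℝ (ω j)).hasFDerivAt
  refine (ridge.smul_const (u j)).congr_fderiv ?_
  ext v
  simp [mul_smul]

theorem not_stableFixedPoint_of_large_term_general
    (hφ : ∀ j, HasDerivAt (φ j) (φ' j) (inner ℝ (ω j) x)) (hφ' : ∀ j, 0 ≤ φ' j)
    {f : E → E} (hf : ∀ y, f y = ∑ j, φ j (inner ℝ (ω j) y) • ω j) (j : ι) :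
    φ' j * ‖ω j‖ ^ 2 ≤ ‖fderiv ℝ f x‖ := by
  rw [funext hf, (hasFDerivAt_sum_comp_inner_smul ω hφ).fderiv]
  exact mul_norm_sq_le_norm_sum_smul_rankOne_self (𝕜 := ℝ) hφ' ω j

end RidgeSum

section Matrix

open InnerProductSpace Matrix

variable {m n : Type*} [Fintype m]

theorem inner_toLp_col (W : Matrix m n ℝ) (j : n) (y : EuclideanSpace ℝ m) :
    inner ℝ (WithLp.toLp 2 (W.col j)) y = ∑ t, W t j * y t := by
  simp [PiLp.inner_apply, mul_comm]

variable [Fintype n]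

theorem toEuclideanCLM_mul_diagonal_mul_conjTranspose {𝕜 : Type*} [RCLike 𝕜]
    [DecidableEq m] [DecidableEq n] (A B : Matrix m n 𝕜) (c : n → 𝕜) :
    toEuclideanCLM (𝕜 := 𝕜) (A * diagonal c * Bᴴ) =
      ∑ j, c j • rankOne 𝕜 (WithLp.toLp 2 (A.col j)) (WithLp.toLp 2 (B.col j)) := by
  ext v i
  have entry : (A *ᵥ diagonal c *ᵥ Bᴴ *ᵥ v) i =
      ∑ j, A i j * (c j * inner 𝕜 (WithLp.toLp 2 (B.col j)) v) := by
    simp only [mulVec, dotProduct, diagonal_apply, ite_mul, zero_mul, Finset.sum_ite_eq,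
      Finset.mem_univ, if_true, conjTranspose_apply, PiLp.inner_apply, RCLike.inner_apply,
      col_apply, RCLike.star_def, mul_comm]
  rw [ofLp_toEuclideanCLM, ← mulVec_mulVec, ← mulVec_mulVec, entry]
  simp [mul_comm, mul_left_comm]

variable {W : Matrix m n ℝ} {φ : n → ℝ → ℝ} {f : EuclideanSpace ℝ m → EuclideanSpace ℝ m}

theorem eq_sum_comp_inner_smul_toLp_col
    (hf : ∀ y i, f y i = ∑ j, W i j * φ j (∑ t, W t j * y t)) (y : EuclideanSpace ℝ m) :
    f y = ∑ j, φ j (inner ℝ (WithLp.toLp 2 (W.col j)) y) • WithLp.toLp 2 (W.col j) := by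
  ext i
  simp [hf, inner_toLp_col, mul_comm]

theorem fderiv_eq_toEuclideanCLM_mul_diagonal_mul_transpose [DecidableEq m] [DecidableEq n]
    {φ' : n → ℝ} {x : EuclideanSpace ℝ m}
    (hf : ∀ y i, f y i = ∑ j, W i j * φ j (∑ t, W t j * y t))
    (hφ : ∀ j, HasDerivAt (φ j) (φ' j) (∑ t, W t j * x t)) :
    fderiv ℝ f x = toEuclideanCLM (𝕜 := ℝ) (W * diagonal φ' * Wᵀ) := by
  simp only [← inner_toLp_col] at hφ
  rw [funext (eq_sum_comp_inner_smul_toLp_col hf),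
    (hasFDerivAt_sum_comp_inner_smul _ hφ).fderiv, ← conjTranspose_eq_transpose_of_trivial,
    toEuclideanCLM_mul_diagonal_mul_conjTranspose]

end Matrix

/-- For `f(x) = W·Φ(Wᵀx)` with `φ` differentiable and `φ′ ≥ 0`: if the
spectral norm of the Jacobian `W·D·Wᵀ` at `x` is `< 1` then `φ′(ω_jᵀx)·‖ω_j‖² < 1` for every
`j`; in particular, if some `j` satisfies `φ′(ω_jᵀx)·‖ω_j‖² ≥ 1` then `x` is not a stable
fixed point of `f`. -/
theorem not_stableFixedPoint_of_large_term
    {d n : ℕ}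
    (W : Matrix (Fin d) (Fin n) ℝ) (φ : ℝ → ℝ) (hφ : Differentiable ℝ φ)
    (hφ' : ∀ t, 0 ≤ deriv φ t)
    (f : EuclideanSpace ℝ (Fin d) → EuclideanSpace ℝ (Fin d))
    (hf : ∀ x i, f x i = ∑ j, W i j * φ (∑ t, W t j * x t))
    (x : EuclideanSpace ℝ (Fin d)) :
    (‖Matrix.toEuclideanCLM (𝕜 := ℝ)
        (W * Matrix.diagonal (fun j => deriv φ (∑ t, W t j * x t)) * W.transpose)‖ < 1 →
      ∀ j, deriv φ (∑ t, W t j * x t) * (∑ i, W i j ^ 2) < 1) ∧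
    ((∃ j, 1 ≤ deriv φ (∑ t, W t j * x t) * (∑ i, W i j ^ 2)) →
      ¬ IsStableFixedPointE f x) := by
  have bound (j : Fin n) :
      deriv φ (∑ t, W t j * x t) * ∑ i, W i j ^ 2 ≤ ‖fderiv ℝ f x‖ := by
    simpa only [inner_toLp_col, EuclideanSpace.real_norm_sq_eq, Matrix.col_apply] using
      not_stableFixedPoint_of_large_term_general (fun j ↦ (hφ _).hasDerivAt) (fun j ↦ hφ' _)
        (eq_sum_comp_inner_smul_toLp_col hf) j
  rw [← fderiv_eq_toEuclideanCLM_mul_diagonal_mul_transpose hf fun j ↦ (hφ _).hasDerivAt]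
  exact ⟨fun norm_lt_one j ↦ (bound j).trans_lt norm_lt_one,
    fun ⟨j, hj⟩ ⟨_, _, norm_lt_one⟩ ↦ (hj.trans (bound j)).not_gt norm_lt_one⟩

end
end
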